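/- arXiv:1406.6514 — 2 statements merged into one kernel-verified Lean document; each statement's English description precedes it below -/
import Mathlib

section
/- Let $Z \sim N_p(0,\Sigma)$ with $\Sigma \in \mathcal{F}_\alpha$, and let coefficients $\bar{B}^{(\tau)}_{ij}$ satisfy $0 \le \bar{B}^{(\tau)}_{ij} \le C_n$ and $\bar{B}^{(\tau)}_{ij} = 0$ for $|i-j| \ge \tau$. Define $U = \frac{1}{n^2}\sum_{1\le i,j\le p} \bar{B}^{(\tau)}_{ij}\{\sigma_{ii}(z_j^2-\sigma_{jj}) + \sigma_{jj}(z_i^2-\sigma_{ii})\}$. Then for any even $K_0 \ge 2$ there exists $C$ such that $\mathbb{E}[U^{K_0}] \le C\,(C_n\tau)^{K_0} p^{K_0/2}/n^{2K_0}$ for all $n \ge 3$ and $1 \le \tau \le p$. -/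
open MeasureTheory ProbabilityTheory Finset

noncomputable section

/-- `Z` is a centered Gaussian vector with covariance matrix `S`. -/
def IsGaussianVec {Ω : Type*} [MeasureSpace Ω] {p : ℕ}
    (Z : Ω → Fin p → ℝ) (S : Matrix (Fin p) (Fin p) ℝ) : Prop :=
  ∀ a : Fin p → ℝ,
    Measure.map (fun ω => ∑ i, a i * Z ω i) (ℙ : Measure Ω)
      = gaussianReal 0 (∑ i, ∑ j, a i * S i j * a j).toNNReal

lemma gauss_sq_aux (x : ℝ) (hx : x ≤ 1 / 2) :
    (Real.sqrt (1 - x))⁻¹ * Real.exp (-x / 2) ≤ Real.exp (x ^ 2) := by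
  have h1 : 0 < 1 - x := by linarith
  have h2 : 1 ≤ (1 - x) * Real.exp (x + 2 * x ^ 2) := by
    have h3 := Real.add_one_le_exp (x + 2 * x ^ 2)
    have h4 : (1 - x) * (x + 2 * x ^ 2 + 1) ≤ (1 - x) * Real.exp (x + 2 * x ^ 2) :=
      mul_le_mul_of_nonneg_left h3 h1.le
    nlinarith [mul_nonneg (sq_nonneg x) (sub_nonneg.2 hx)]
  have hs : 0 < Real.sqrt (1 - x) := Real.sqrt_pos.2 h1
  rw [inv_mul_le_iff₀ hs]
  have h5 : 1 ≤ Real.sqrt (1 - x) * Real.exp (x / 2 + x ^ 2) := by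
    have : Real.exp (x + 2 * x ^ 2) = Real.exp (x / 2 + x ^ 2) ^ 2 := by
      rw [← Real.exp_nat_mul]; congr 1; push_cast; ring
    rw [this] at h2
    have h6 : (1:ℝ) ^ 2 ≤ (Real.sqrt (1 - x) * Real.exp (x / 2 + x ^ 2)) ^ 2 := by
      rw [mul_pow, Real.sq_sqrt h1.le]; simpa using h2
    exact le_of_sq_le_sq h6 (by positivity)
  have h7 : Real.exp (x / 2 + x ^ 2) * Real.exp (-x / 2) = Real.exp (x ^ 2) := by
    rw [← Real.exp_add]; congr 1; ring
  calc Real.exp (-x / 2) ≤ (Real.sqrt (1 - x) * Real.exp (x / 2 + x ^ 2)) * Real.exp (-x / 2) :=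
        le_mul_of_one_le_left (Real.exp_pos _).le h5
    _ = _ := by rw [mul_assoc, h7]

lemma gauss_sq_std (s : ℝ) (hs : s < 1 / 2) :
    Integrable (fun x : ℝ => Real.exp (s * x ^ 2)) (gaussianReal 0 1) ∧
    ∫ x, Real.exp (s * x ^ 2) ∂(gaussianReal 0 1) = (Real.sqrt (1 - 2 * s))⁻¹ := by
  have hb : 0 < 1 / 2 - s := by linarith
  have key : ∀ x : ℝ, gaussianPDFReal 0 1 x * Real.exp (s * x ^ 2)
      = (Real.sqrt (2 * Real.pi))⁻¹ * Real.exp (-(1 / 2 - s) * x ^ 2) := by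
    intro x
    simp only [gaussianPDFReal, NNReal.coe_one, mul_one, sub_zero]
    rw [mul_assoc, ← Real.exp_add]
    congr 2; ring
  constructor
  · rw [gaussianReal_of_var_ne_zero 0 one_ne_zero,
      integrable_withDensity_iff_integrable_smul' (measurable_gaussianPDF 0 1)
        (ae_of_all _ fun x => gaussianPDF_lt_top)]
    have : (fun x : ℝ => (gaussianPDF 0 1 x).toReal • Real.exp (s * x ^ 2))
        = fun x => (Real.sqrt (2 * Real.pi))⁻¹ * Real.exp (-(1 / 2 - s) * x ^ 2) := by
      funext x
      rw [toReal_gaussianPDF, smul_eq_mul, key]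
    rw [this]
    exact (integrable_exp_neg_mul_sq hb).const_mul _
  · rw [integral_gaussianReal_eq_integral_smul one_ne_zero]
    simp_rw [smul_eq_mul, key]
    rw [integral_const_mul, integral_gaussian, ← Real.sqrt_inv, ← Real.sqrt_inv,
      ← Real.sqrt_mul (by positivity)]
    congr 1
    have := Real.pi_pos
    have h2 : 1 - 2 * s ≠ 0 := by linarith
    field_simp

lemma gauss_sq {v : ℝ} (hv : 0 ≤ v) (t : ℝ) (ht : 2 * t * v ≤ 1 / 2) :
    Integrable (fun x : ℝ => Real.exp (t * (x ^ 2 - v))) (gaussianReal 0 v.toNNReal) ∧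
    ∫ x, Real.exp (t * (x ^ 2 - v)) ∂(gaussianReal 0 v.toNNReal)
      ≤ Real.exp ((2 * t * v) ^ 2) := by
  have hmap : gaussianReal 0 v.toNNReal
      = (gaussianReal 0 1).map (fun x => Real.sqrt v * x) := by
    rw [gaussianReal_map_const_mul]
    congr 1
    · simp
    · ext; simp [Real.sq_sqrt hv, hv]
  obtain ⟨hi, he⟩ := gauss_sq_std (t * v) (by linarith)
  have hf : (fun x : ℝ => Real.exp (t * ((Real.sqrt v * x) ^ 2 - v)))
      = fun x => Real.exp (t * v * x ^ 2) * Real.exp (- (2 * t * v) / 2) := by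
    funext x
    rw [← Real.exp_add, mul_pow, Real.sq_sqrt hv]; congr 1; ring
  rw [hmap]
  constructor
  · rw [integrable_map_measure (by fun_prop) (by fun_prop)]
    show Integrable (fun x : ℝ => Real.exp (t * ((Real.sqrt v * x) ^ 2 - v))) _
    rw [hf]
    exact hi.mul_const _
  · rw [integral_map (by fun_prop) (by fun_prop)]
    simp only [hf]
    rw [integral_mul_const, he]
    have := gauss_sq_aux (2 * t * v) ht
    rwa [show 2 * (t * v) = 2 * t * v by ring]

lemma pow_le_exp_add {K : ℕ} (hK : Even K) (y : ℝ) :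
    y ^ K ≤ K.factorial * (Real.exp y + Real.exp (-y)) := by
  have h := Real.pow_div_factorial_le_exp |y| (abs_nonneg y) K
  rw [hK.pow_abs, div_le_iff₀ (by positivity)] at h
  have h2 : Real.exp |y| ≤ Real.exp y + Real.exp (-y) := Real.exp_abs_le y
  calc y ^ K ≤ _ := h
    _ ≤ _ := by rw [mul_comm]; gcongr

lemma diag_exists {p : ℕ} (S : Matrix (Fin p) (Fin p) ℝ) (hS : S.IsSymm) (w : Fin p → ℝ) (L : ℝ)
    (hw : ∀ i, 0 ≤ w i) (hwL : ∀ i, w i ≤ L) :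
    ∃ (A : Matrix (Fin p) (Fin p) ℝ) (l : Fin p → ℝ),
      A * S * A.transpose = Matrix.diagonal l ∧ A.transpose * A = Matrix.diagonal w ∧
      ∀ k, ∑ i, A k i ^ 2 ≤ L := by
  set D : Matrix (Fin p) (Fin p) ℝ := Matrix.diagonal fun i => Real.sqrt (w i) with hD
  have hDt : D.transpose = D := Matrix.diagonal_transpose _
  have hH : (D * S * D).IsHermitian := by
    rw [Matrix.IsHermitian, Matrix.conjTranspose_eq_transpose_of_trivial]
    rw [Matrix.transpose_mul, Matrix.transpose_mul, hDt, hS.eq, Matrix.mul_assoc]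
  set O : Matrix (Fin p) (Fin p) ℝ := (hH.eigenvectorUnitary : Matrix (Fin p) (Fin p) ℝ) with hO
  have hOs : star O = O.transpose := by
    rw [Matrix.star_eq_conjTranspose, Matrix.conjTranspose_eq_transpose_of_trivial]
  have h1 : O.transpose * O = 1 := by
    rw [← hOs]; exact Unitary.coe_star_mul_self hH.eigenvectorUnitary
  have h2 : O * O.transpose = 1 := by
    rw [← hOs]; exact Unitary.coe_mul_star_self hH.eigenvectorUnitary
  have hsp : D * S * D = O * Matrix.diagonal hH.eigenvalues * O.transpose := by
    have := hH.spectral_theorem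
    rw [Unitary.conjStarAlgAut_apply] at this
    rw [← hOs]
    simpa using this
  generalize hH.eigenvalues = ev at hsp
  refine ⟨O.transpose * D, ev, ?_, ?_, ?_⟩
  · rw [Matrix.transpose_mul, Matrix.transpose_transpose, hDt]
    calc O.transpose * D * S * (D * O) = O.transpose * (D * S * D) * O := by
          simp only [Matrix.mul_assoc]
      _ = (O.transpose * O) * Matrix.diagonal ev * (O.transpose * O) := by
          rw [hsp]; simp only [Matrix.mul_assoc]
      _ = _ := by rw [h1]; simp
  · rw [Matrix.transpose_mul, Matrix.transpose_transpose, hDt]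
    calc D * O * (O.transpose * D) = D * (O * O.transpose) * D := by
          simp only [Matrix.mul_assoc]
      _ = _ := by
          rw [h2, Matrix.mul_one, hD, Matrix.diagonal_mul_diagonal]
          congr 1; funext i; exact Real.mul_self_sqrt (hw i)
  · intro k
    have h3 : ∑ i, O i k ^ 2 = 1 := by
      have := congrFun (congrFun h1 k) k
      simp only [Matrix.mul_apply, Matrix.transpose_apply, Matrix.one_apply_eq] at this
      rw [← this]; exact Finset.sum_congr rfl fun i _ => by ring
    calc ∑ i, (O.transpose * D) k i ^ 2 = ∑ i, O i k ^ 2 * w i := by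
          refine Finset.sum_congr rfl fun i _ => ?_
          rw [hD, Matrix.mul_diagonal, mul_pow, Real.sq_sqrt (hw i), Matrix.transpose_apply]
      _ ≤ ∑ i, O i k ^ 2 * L :=
          Finset.sum_le_sum fun i _ => mul_le_mul_of_nonneg_left (hwL i) (sq_nonneg _)
      _ = L := by rw [← Finset.sum_mul, h3, one_mul]

lemma gvec_linear {Ω : Type*} [MeasureSpace Ω] {p : ℕ}
    {Z : Ω → Fin p → ℝ} {S : Matrix (Fin p) (Fin p) ℝ} (h : IsGaussianVec Z S)
    (A : Matrix (Fin p) (Fin p) ℝ) :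
    IsGaussianVec (fun ω => A.mulVec (Z ω)) (A * S * A.transpose) := by
  intro a
  have h1 := h (Matrix.vecMul a A)
  have e1 : (fun ω => ∑ i, a i * A.mulVec (Z ω) i)
      = fun ω => ∑ i, Matrix.vecMul a A i * Z ω i := by
    funext ω
    exact Matrix.dotProduct_mulVec a A (Z ω)
  have e0 : ∀ (T : Matrix (Fin p) (Fin p) ℝ) (b : Fin p → ℝ),
      ∑ i, ∑ j, b i * T i j * b j = b ⬝ᵥ (T.mulVec b) := by
    intro T b
    simp only [dotProduct, Matrix.mulVec, Finset.mul_sum, mul_assoc]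
  have e2 : ∑ i, ∑ j, a i * (A * S * A.transpose) i j * a j
      = ∑ i, ∑ j, Matrix.vecMul a A i * S i j * Matrix.vecMul a A j := by
    rw [e0, e0, ← Matrix.mulVec_mulVec, ← Matrix.mulVec_mulVec, Matrix.mulVec_transpose,
      Matrix.dotProduct_mulVec]
  rw [e1, e2]
  exact h1

lemma gvec_indep {Ω : Type*} [MeasureSpace Ω] [IsProbabilityMeasure (ℙ : Measure Ω)] {p : ℕ}
    {Y : Ω → Fin p → ℝ} (hY : Measurable Y) {l : Fin p → ℝ} (hl : ∀ i, 0 ≤ l i)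
    (h : IsGaussianVec Y (Matrix.diagonal l)) :
    iIndepFun (fun k ω => Y ω k) (ℙ : Measure Ω) ∧
    ∀ k, Measure.map (fun ω => Y ω k) (ℙ : Measure Ω) = gaussianReal 0 (l k).toNNReal := by
  have hq : ∀ a : Fin p → ℝ, ∑ i, ∑ j, a i * Matrix.diagonal l i j * a j = ∑ i, l i * a i ^ 2 := by
    intro a
    refine Finset.sum_congr rfl fun i _ => ?_
    rw [Finset.sum_eq_single i]
    · simp; ring
    · intro j _ hj; simp [Matrix.diagonal_apply_ne' _ hj]
    · simp
  have hm : ∀ k, Measurable fun ω => Y ω k := fun k => by fun_prop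
  have hmarg : ∀ k, Measure.map (fun ω => Y ω k) (ℙ : Measure Ω)
      = gaussianReal 0 (l k).toNNReal := by
    intro k
    have := h (Pi.single k 1)
    rw [hq] at this
    simpa [Pi.single_apply] using this
  refine ⟨?_, hmarg⟩
  have hG : HasGaussianLaw (fun ω => (fun k => Y ω k)) (ℙ : Measure Ω) := by
    refine ⟨isGaussian_of_map_eq_gaussianReal fun T => ?_⟩
    refine ⟨0, (∑ i, ∑ j, T (Pi.single i 1) * Matrix.diagonal l i j * T (Pi.single j 1)).toNNReal, ?_⟩
    · rw [Measure.map_map (by fun_prop) (by fun_prop)]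
      have : (T ∘ fun ω => (fun k => Y ω k)) = fun ω => ∑ i, T (Pi.single i 1) * Y ω i := by
        funext ω
        have := LinearMap.pi_apply_eq_sum_univ (T : (Fin p → ℝ) →ₗ[ℝ] ℝ) (Y ω)
        simp only [Function.comp]
        refine (this.trans ?_)
        refine Finset.sum_congr rfl fun i _ => ?_
        simp only [smul_eq_mul, ContinuousLinearMap.coe_coe, mul_comm]
        congr 2
        funext j; simp [Pi.single_apply, eq_comm]
      rw [this]
      exact h fun i => T (Pi.single i 1)
  refine HasGaussianLaw.iIndepFun_of_covariance_eq_zero hG fun i j hij => ?_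
  have hvar : ∀ a : Fin p → ℝ, Var[fun ω => ∑ i, a i * Y ω i; ℙ] = ∑ i, l i * a i ^ 2 := by
    intro a
    have h1 := h a
    rw [hq] at h1
    have : Var[id; Measure.map (fun ω => ∑ i, a i * Y ω i) (ℙ : Measure Ω)] = ∑ i, l i * a i ^ 2 := by
      rw [h1, variance_id_gaussianReal, Real.coe_toNNReal]
      exact Finset.sum_nonneg fun i _ => mul_nonneg (hl i) (sq_nonneg _)
    rw [← this, variance_map (by fun_prop) (by fun_prop)]
    rfl
  have v1 := hvar (Pi.single i 1)
  have v2 := hvar (Pi.single j 1)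
  have v3 := hvar (Pi.single i 1 + Pi.single j 1)
  have hadd := variance_fun_add (hG.eval i).memLp_two (hG.eval j).memLp_two
  simp only [Pi.add_apply, add_mul, Finset.sum_add_distrib, Pi.single_apply, ite_mul, one_mul, zero_mul,
    Finset.sum_ite_eq', Finset.mem_univ, if_true, ite_pow, one_pow, mul_ite, mul_one, mul_zero, ne_eq,
    OfNat.ofNat_ne_zero, not_false_eq_true, zero_pow] at v1 v2 v3
  have hs : ∑ x, l x * ((if x = i then (1:ℝ) else 0) + if x = j then 1 else 0) ^ 2 = l i + l j := by
    have : ∀ x, l x * ((if x = i then (1:ℝ) else 0) + if x = j then 1 else 0) ^ 2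
        = (if x = i then l x else 0) + if x = j then l x else 0 := by
      intro x
      by_cases h1 : x = i
      · have : x ≠ j := fun h2 => hij (h1.symm.trans h2)
        simp [h1, hij]
      · simp [h1]
    simp [this, Finset.sum_add_distrib]
  rw [hs] at v3
  rw [v1, v2, v3] at hadd
  linarith

lemma moment_bound {Ω : Type*} [MeasureSpace Ω] [IsProbabilityMeasure (ℙ : Measure Ω)] {p : ℕ}
    (hp : 1 ≤ p) {K : ℕ} (hK : Even K)
    {Y : Ω → Fin p → ℝ} (hY : Measurable Y) {l : Fin p → ℝ} {Λ : ℝ} (hΛ : 0 < Λ)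
    (hl : ∀ i, 0 ≤ l i) (hlΛ : ∀ i, l i ≤ Λ)
    (h : IsGaussianVec Y (Matrix.diagonal l)) :
    ∫ ω, (∑ k, (Y ω k ^ 2 - l k)) ^ K ∂(ℙ : Measure Ω)
      ≤ 2 * K.factorial * Real.exp 1 * (4 * Λ * Real.sqrt p) ^ K := by
  obtain ⟨hind, hmarg⟩ := gvec_indep hY hl h
  have hp0 : (0:ℝ) < p := by exact_mod_cast hp
  have hp1 : (1:ℝ) ≤ p := by exact_mod_cast hp
  have hsp : 1 ≤ Real.sqrt p := Real.one_le_sqrt.2 hp1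
  set t : ℝ := (4 * Λ * Real.sqrt p)⁻¹ with ht
  have htpos : 0 < t := by positivity
  have htsq : t ^ 2 * (16 * Λ ^ 2 * p) = 1 := by
    rw [ht, inv_pow, mul_pow, mul_pow, Real.sq_sqrt hp0.le]; field_simp; norm_num
  have htΛ : t * Λ ≤ 1 / 4 := by
    have : t * (4 * Λ * Real.sqrt p) = 1 := inv_mul_cancel₀ (by positivity)
    nlinarith [mul_pos htpos hΛ]
  set X : Fin p → Ω → ℝ := fun k ω => Y ω k ^ 2 - l k with hX
  have hXm : ∀ k, Measurable (X k) := fun k => by fun_prop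
  have hXind : iIndepFun X (ℙ : Measure Ω) :=
    hind.comp (fun k x => x ^ 2 - l k) (fun k => by fun_prop)
  have hone : ∀ s : ℝ, (s = t ∨ s = -t) → ∀ k,
      Integrable (fun ω => Real.exp (s * X k ω)) (ℙ : Measure Ω) ∧
      mgf (X k) ℙ s ≤ Real.exp (1 / (p : ℝ)) := by
    intro s hs k
    have htl : t * l k ≤ 1 / 4 :=
      (mul_le_mul_of_nonneg_left (hlΛ k) htpos.le).trans htΛ
    have htl0 : 0 ≤ t * l k := mul_nonneg htpos.le (hl k)
    have hs1 : 2 * s * l k ≤ 1 / 2 := by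
      rcases hs with rfl | rfl <;> nlinarith
    have hs2 : (2 * s * l k) ^ 2 ≤ 1 / (p:ℝ) := by
      rw [le_div_iff₀ hp0]
      have : s ^ 2 = t ^ 2 := by rcases hs with rfl | rfl <;> ring
      have h3 : l k ^ 2 ≤ Λ ^ 2 := pow_le_pow_left₀ (hl k) (hlΛ k) 2
      have h4 : (2 * s * l k) ^ 2 * p = 4 * (t ^ 2 * p * l k ^ 2) := by
        rw [← this]; ring
      have h5 : t ^ 2 * p * l k ^ 2 ≤ t ^ 2 * p * Λ ^ 2 :=
        mul_le_mul_of_nonneg_left h3 (by positivity)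
      rw [h4]; nlinarith
    obtain ⟨gi, gb⟩ := gauss_sq (hl k) s hs1
    rw [← hmarg k] at gi gb
    constructor
    · rw [integrable_map_measure (by fun_prop) (by fun_prop)] at gi
      exact gi
    · rw [integral_map (by fun_prop) (by fun_prop)] at gb
      exact gb.trans (Real.exp_le_exp.2 hs2)
  have hsum : ∀ s : ℝ, (s = t ∨ s = -t) →
      Integrable (fun ω => Real.exp (s * ∑ k, X k ω)) (ℙ : Measure Ω) ∧
      ∫ ω, Real.exp (s * ∑ k, X k ω) ∂(ℙ : Measure Ω) ≤ Real.exp 1 := by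
    intro s hs
    have h1 := hXind.integrable_exp_mul_sum hXm (s := Finset.univ) (t := s)
      (fun k _ => (hone s hs k).1)
    have h2 := hXind.mgf_sum (t := s) hXm Finset.univ
    simp only [mgf, Finset.sum_apply] at h1 h2
    refine ⟨h1, ?_⟩
    rw [h2]
    calc _ ≤ ∏ _k : Fin p, Real.exp (1 / (p:ℝ)) :=
          Finset.prod_le_prod (fun k _ => integral_nonneg fun ω => (Real.exp_pos _).le)
            (fun k _ => (hone s hs k).2)
      _ = Real.exp 1 := by
          rw [Finset.prod_const, Finset.card_univ, Fintype.card_fin, ← Real.exp_nat_mul]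
          congr 1; field_simp
  obtain ⟨i1, b1⟩ := hsum t (Or.inl rfl)
  obtain ⟨i2, b2⟩ := hsum (-t) (Or.inr rfl)
  have hpt : ∀ ω, (∑ k, X k ω) ^ K ≤ (4 * Λ * Real.sqrt p) ^ K * (K.factorial *
      (Real.exp (t * ∑ k, X k ω) + Real.exp (-t * ∑ k, X k ω))) := by
    intro ω
    have h1 := pow_le_exp_add hK (t * ∑ k, X k ω)
    rw [← neg_mul] at h1
    have h2 : (∑ k, X k ω) ^ K = (4 * Λ * Real.sqrt p) ^ K * (t * ∑ k, X k ω) ^ K := by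
      rw [← mul_pow, ← mul_assoc, ht, mul_inv_cancel₀ (by positivity), one_mul]
    rw [h2]
    exact mul_le_mul_of_nonneg_left h1 (by positivity)
  calc ∫ ω, (∑ k, X k ω) ^ K ∂(ℙ : Measure Ω)
      ≤ ∫ ω, (4 * Λ * Real.sqrt p) ^ K * (K.factorial *
      (Real.exp (t * ∑ k, X k ω) + Real.exp (-t * ∑ k, X k ω))) ∂(ℙ : Measure Ω) :=
        integral_mono_of_nonneg (ae_of_all _ fun ω => hK.pow_nonneg _)
          (((i1.add i2).const_mul _).const_mul _) (ae_of_all _ hpt)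
    _ = (4 * Λ * Real.sqrt p) ^ K * (K.factorial * (∫ ω, Real.exp (t * ∑ k, X k ω) ∂(ℙ : Measure Ω)
          + ∫ ω, Real.exp (-t * ∑ k, X k ω) ∂(ℙ : Measure Ω))) := by
        rw [integral_const_mul, integral_const_mul, integral_add i1 i2]
    _ ≤ (4 * Λ * Real.sqrt p) ^ K * (K.factorial * (Real.exp 1 + Real.exp 1)) := by
        gcongr
    _ = _ := by ring

lemma band_sum {p τ : ℕ} (i : Fin p) (f : Fin p → ℝ) (c : ℝ)
    (hf : ∀ j, f j ≤ c) (hc : 0 ≤ c)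
    (hz : ∀ j : Fin p, (τ : ℤ) ≤ ((i : ℤ) - (j : ℤ)).natAbs → f j = 0) :
    ∑ j, f j ≤ 2 * τ * c := by
  classical
  set T := Finset.univ.filter fun j : Fin p => ¬ (τ : ℤ) ≤ ((i : ℤ) - (j : ℤ)).natAbs with hT
  have h1 : ∑ j, f j = ∑ j ∈ T, f j := by
    symm
    apply Finset.sum_subset (Finset.subset_univ _)
    intro j _ hj
    apply hz
    by_contra h
    exact hj (by rw [hT]; exact Finset.mem_filter.2 ⟨Finset.mem_univ _, h⟩)
  have h2 : T.card ≤ 2 * τ := by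
    have : T.card ≤ (Finset.Ioc ((i : ℤ) - τ) ((i : ℤ) + τ)).card := by
      apply Finset.card_le_card_of_injOn (fun j : Fin p => (j : ℤ))
      · intro j hj
        have hj' := (Finset.mem_filter.1 hj).2
        simp only [Finset.coe_Ioc, Set.mem_Ioc]
        omega
      · intro a _ b _ hab
        simp only at hab
        ext; exact_mod_cast hab
    rw [Int.card_Ioc] at this
    omega
  rw [h1]
  calc ∑ j ∈ T, f j ≤ ∑ _j ∈ T, c := Finset.sum_le_sum fun j _ => hf j
    _ = T.card * c := by simp
    _ ≤ (2 * τ : ℕ) * c := by gcongr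
    _ = _ := by push_cast; ring

/-- For `Z ∼ N_p(0,Σ)` with `Σ ∈ 𝓕_α`, coefficients `0 ≤ B̄_ij ≤ C_n` vanishing
for `|i-j| ≥ τ`, and
`U = n⁻² ∑_{i,j} B̄_ij (σ_ii(z_j²−σ_jj) + σ_jj(z_i²−σ_ii))`, for any even
`K₀ ≥ 2` there is `C` with `𝔼 U^{K₀} ≤ C (C_n τ)^{K₀} p^{K₀/2}/n^{2K₀}`. -/
theorem stmt13 (M M₀ α : ℝ) (hM : 0 < M) (hM₀ : 0 < M₀) (hα : 0 < α)
    (K₀ : ℕ) (hK : 2 ≤ K₀) (hKeven : Even K₀) :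
    ∃ C : ℝ, 0 < C ∧
      ∀ (p n τ : ℕ), 3 ≤ n → 1 ≤ τ → τ ≤ p →
      ∀ (Cn : ℝ), 0 ≤ Cn →
      ∀ (S : Matrix (Fin p) (Fin p) ℝ), S.IsSymm →
        (∀ v : Fin p → ℝ, 0 ≤ ∑ i, ∑ j, v i * S i j * v j) →
        (∀ v : Fin p → ℝ, ∑ i, ∑ j, v i * S i j * v j ≤ M₀ * ∑ i, v i ^ 2) →
        (∀ k : ℕ, 1 ≤ k → ∀ j : Fin p,
            ∑ i ∈ Finset.univ.filter
                (fun i : Fin p => k < ((i : ℤ) - (j : ℤ)).natAbs),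
              |S i j| ≤ M * (k : ℝ) ^ (-α)) →
      ∀ (B : Matrix (Fin p) (Fin p) ℝ),
        (∀ i j, 0 ≤ B i j ∧ B i j ≤ Cn) →
        (∀ i j : Fin p, (τ : ℤ) ≤ ((i : ℤ) - (j : ℤ)).natAbs → B i j = 0) →
      ∀ (Ω : Type) (_ : MeasureSpace Ω)
        (_ : IsProbabilityMeasure (ℙ : Measure Ω))
        (Z : Ω → Fin p → ℝ), Measurable Z → IsGaussianVec Z S →
      (∫ ω, ((1 / (n : ℝ) ^ 2) * ∑ i : Fin p, ∑ j : Fin p,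
            B i j * (S i i * (Z ω j ^ 2 - S j j) + S j j * (Z ω i ^ 2 - S i i))) ^ K₀ ∂ℙ)
        ≤ C * (Cn * τ) ^ K₀ * (p : ℝ) ^ (K₀ / 2) / (n : ℝ) ^ (2 * K₀) := by
  refine ⟨2 * K₀.factorial * Real.exp 1 * (16 * M₀ ^ 2) ^ K₀, by positivity, ?_⟩
  intro p n τ hn hτ hτp Cn hCn S hS hpos hM0 _ B hB hBz Ω _ _ Z hZ hG
  have hn0 : (0:ℝ) < n := by exact_mod_cast (by omega : 0 < n)
  have hτ0 : (0:ℝ) < τ := by exact_mod_cast hτ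
  have hp1 : 1 ≤ p := hτ.trans hτp
  have hdiag : ∀ i, 0 ≤ S i i ∧ S i i ≤ M₀ := by
    intro i
    have h1 := hpos (Pi.single i 1)
    have h2 := hM0 (Pi.single i 1)
    simp only [Pi.single_apply, ite_mul, one_mul, zero_mul, mul_ite, mul_one, mul_zero,
      Finset.sum_ite_eq', Finset.mem_univ, if_true, ite_pow, one_pow, ne_eq,
      OfNat.ofNat_ne_zero, not_false_eq_true, zero_pow] at h1 h2
    exact ⟨by simpa using h1, by simpa using h2⟩
  rcases hCn.eq_or_lt with rfl | hCpos
  · have hB0 : ∀ i j, B i j = 0 := fun i j => le_antisymm (hB i j).2 (hB i j).1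
    have hK0 : K₀ ≠ 0 := by omega
    simp [hB0, hK0]
  set w : Fin p → ℝ := fun i => ∑ j, B i j * S j j + ∑ j, B j i * S j j with hw
  set L : ℝ := 4 * τ * Cn * M₀ with hL
  have hLpos : 0 < L := by positivity
  have hw0 : ∀ i, 0 ≤ w i := fun i => add_nonneg
    (Finset.sum_nonneg fun j _ => mul_nonneg (hB i j).1 (hdiag j).1)
    (Finset.sum_nonneg fun j _ => mul_nonneg (hB j i).1 (hdiag j).1)
  have hwL : ∀ i, w i ≤ L := by
    intro i
    have h1 := band_sum (τ := τ) i (fun j => B i j * S j j) (Cn * M₀)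
      (fun j => mul_le_mul (hB i j).2 (hdiag j).2 (hdiag j).1 hCn) (by positivity)
      (fun j hj => by simp [hBz i j hj])
    have h2 := band_sum (τ := τ) i (fun j => B j i * S j j) (Cn * M₀)
      (fun j => mul_le_mul (hB j i).2 (hdiag j).2 (hdiag j).1 hCn) (by positivity)
      (fun j hj => by simp [hBz j i (by omega)])
    simp only [hw, hL]
    linarith
  have hU : ∀ ω, ∑ i : Fin p, ∑ j : Fin p,
      B i j * (S i i * (Z ω j ^ 2 - S j j) + S j j * (Z ω i ^ 2 - S i i))
      = ∑ i, w i * (Z ω i ^ 2 - S i i) := by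
    intro ω
    simp only [hw, mul_add, add_mul, Finset.sum_add_distrib, Finset.sum_mul]
    rw [add_comm]
    congr 1
    · exact Finset.sum_congr rfl fun i _ => Finset.sum_congr rfl fun j _ => by ring
    · rw [Finset.sum_comm]
      exact Finset.sum_congr rfl fun i _ => Finset.sum_congr rfl fun j _ => by ring
  obtain ⟨A, l, hA1, hA2, hA3⟩ := diag_exists S hS w L hw0 hwL
  have hlq : ∀ k, l k = ∑ i, ∑ j, A k i * S i j * A k j := by
    intro k
    have := congrFun (congrFun hA1 k) k
    rw [Matrix.diagonal_apply_eq] at this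
    rw [← this]
    simp only [Matrix.mul_apply, Matrix.transpose_apply, Finset.sum_mul]
    rw [Finset.sum_comm]
  have hl0 : ∀ k, 0 ≤ l k := fun k => by rw [hlq]; exact hpos _
  have hlΛ : ∀ k, l k ≤ M₀ * L := fun k => by
    rw [hlq]; exact (hM0 _).trans (mul_le_mul_of_nonneg_left (hA3 k) hM₀.le)
  have hGY := gvec_linear hG A
  rw [hA1] at hGY
  have hYm : Measurable fun ω => A.mulVec (Z ω) := by
    refine measurable_pi_lambda _ fun k => ?_
    simp only [Matrix.mulVec, dotProduct]
    fun_prop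
  have hmb := moment_bound hp1 hKeven hYm (by positivity : 0 < M₀ * L) hl0 hlΛ hGY
  have htr : ∑ k, l k = ∑ i, w i * S i i := by
    rw [← Matrix.trace_diagonal, ← hA1, Matrix.mul_assoc, Matrix.trace_mul_comm, Matrix.mul_assoc,
      hA2, Matrix.trace]
    exact Finset.sum_congr rfl fun i _ => by
      rw [Matrix.diag_apply, Matrix.mul_diagonal, mul_comm]
  have hsq : ∀ ω, ∑ k, (A.mulVec (Z ω) k) ^ 2 = ∑ i, w i * Z ω i ^ 2 := by
    intro ω
    have : ∑ k, (A.mulVec (Z ω) k) ^ 2 = A.mulVec (Z ω) ⬝ᵥ A.mulVec (Z ω) := by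
      simp only [dotProduct, sq]
    rw [this, Matrix.dotProduct_mulVec, ← Matrix.mulVec_transpose, Matrix.mulVec_mulVec, hA2]
    simp only [dotProduct, Matrix.mulVec_diagonal]
    exact Finset.sum_congr rfl fun i _ => by ring
  have hUY : ∀ ω, ∑ i, w i * (Z ω i ^ 2 - S i i) = ∑ k, (A.mulVec (Z ω) k ^ 2 - l k) := by
    intro ω
    rw [Finset.sum_sub_distrib, hsq, htr, ← Finset.sum_sub_distrib]
    exact Finset.sum_congr rfl fun i _ => by ring
  simp_rw [hU, hUY, mul_pow]
  rw [integral_const_mul]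
  have hsqrt : Real.sqrt p ^ K₀ = (p:ℝ) ^ (K₀ / 2) := by
    obtain ⟨m, rfl⟩ := hKeven
    rw [← two_mul, pow_mul, Real.sq_sqrt (Nat.cast_nonneg p), Nat.mul_div_cancel_left _ two_pos]
  calc _ ≤ (1 / (n:ℝ) ^ 2) ^ K₀ *
        (2 * K₀.factorial * Real.exp 1 * (4 * (M₀ * L) * Real.sqrt p) ^ K₀) := by
        gcongr
    _ = _ := by
        rw [mul_pow _ (Real.sqrt p), hsqrt, hL, div_pow, ← pow_mul, one_pow]
        have : 4 * (M₀ * (4 * τ * Cn * M₀)) = (16 * M₀ ^ 2) * (Cn * τ) := by ring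
        rw [this, mul_pow (16 * M₀ ^ 2), mul_pow Cn, mul_pow 16]
        ring
end
end

section
/- Let $Z_1, \dots, Z_{n-1}$ be i.i.d. $N_p(0,\Sigma)$ with $\Sigma \in \mathcal{F}_\alpha$, and define $h(Z_m, Z_l) = \sum_{1\le i,j\le p} 2 b_n \bar{b}_{ij}^{(\tau)} (z_{mi}^2 - \sigma_{ii})(z_{lj}^2 - \sigma_{jj})$ with $b_n = \frac{n}{(n+1)(n-2)}$ and $|\bar{b}_{ij}^{(\tau)}| \le C_n$. Then for any even $K_0 \ge 2$ there exists $C$ such that $\mathbb{E}[h(Z_1, Z_2)^{K_0}] \le C (C_n p)^{K_0}/n^{K_0}$, where the bound uses $\sum_{1\le i_1,\dots,i_{K_0}\le p}|\mathbb{E}\prod_{j=1}^{K_0}(z_{1 i_j}^2 - \sigma_{i_j i_j})| \le C p^{K_0/2}$ and independence of $Z_1, Z_2$. -/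
open MeasureTheory ProbabilityTheory Finset

noncomputable section

lemma one_sub_exp_aux (u : ℝ) (hu : |u| ≤ 1/4) : Real.exp (-(u + u^2)) ≤ 1 - u := by
  obtain ⟨h1, h2⟩ := abs_le.1 hu
  have key : 1 ≤ Real.exp (u + u^2) * (1 - u) := by
    rcases le_total 0 u with h | h
    · have h3 := Real.quadratic_le_exp_of_nonneg (x := u + u^2) (by positivity)
      have h4 : (1 + (u + u^2) + (u+u^2)^2/2) * (1 - u) ≤ Real.exp (u + u^2) * (1 - u) :=
        mul_le_mul_of_nonneg_right h3 (by linarith)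
      have h5 : 1 + u + u^2 + u^2/2 ≤ 1 + (u + u^2) + (u+u^2)^2/2 := by
        nlinarith [pow_nonneg h 3, pow_nonneg h 4]
      have h6 := mul_le_mul_of_nonneg_right h5 (by linarith : 0 ≤ 1 - u)
      nlinarith [mul_nonneg (sq_nonneg u) (by linarith : 0 ≤ 1/3 - u)]
    · have h3 := Real.add_one_le_exp (u + u^2)
      have h4 := mul_le_mul_of_nonneg_right h3 (by linarith : 0 ≤ 1 - u)
      nlinarith [mul_nonneg (sq_nonneg u) (by linarith : 0 ≤ - u)]
  rw [Real.exp_neg, inv_le_iff_one_le_mul₀ (Real.exp_pos _)]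
  linarith

lemma chi_mgf (s : ℝ) (hs : |s| ≤ 1/8) :
    Integrable (fun x : ℝ => Real.exp (s * (x^2 - 1))) (gaussianReal 0 1) ∧
    ∫ x, Real.exp (s * (x^2 - 1)) ∂(gaussianReal 0 1) ≤ Real.exp (2 * s^2) := by
  obtain ⟨h1, h2⟩ := abs_le.1 hs
  have hpt : ∀ x : ℝ, gaussianPDFReal 0 1 x • Real.exp (s * (x^2 - 1))
      = ((√(2 * Real.pi))⁻¹ * Real.exp (-s)) * Real.exp (-(1/2 - s) * x^2) := by
    intro x
    simp only [gaussianPDFReal, smul_eq_mul, NNReal.coe_one, mul_one, mul_assoc, sub_zero]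
    rw [← Real.exp_add, ← Real.exp_add]
    congr 2
    ring
  constructor
  · rw [gaussianReal_of_var_ne_zero _ one_ne_zero,
      integrable_withDensity_iff_integrable_smul' (measurable_gaussianPDF _ _)
      (ae_of_all _ fun _ ↦ gaussianPDF_lt_top)]
    simp only [toReal_gaussianPDF, hpt]
    exact (integrable_exp_neg_mul_sq (by linarith)).const_mul _
  · rw [integral_gaussianReal_eq_integral_smul one_ne_zero]
    simp only [hpt]
    rw [integral_const_mul, integral_gaussian]
    have hu := one_sub_exp_aux (2*s) (by rw [abs_mul, abs_two]; linarith)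
    have hpos : 0 < 1 - 2*s := by linarith
    have e1 : (√(2 * Real.pi))⁻¹ * √(Real.pi / (1/2 - s)) = (√(1 - 2*s))⁻¹ := by
      rw [← Real.sqrt_inv, ← Real.sqrt_inv, ← Real.sqrt_mul (by positivity)]
      congr 1
      have : (1/2 - s) ≠ 0 := by linarith
      have := Real.pi_pos.ne'
      field_simp
    have e2 : Real.exp (-(s + 2 * s^2)) ≤ √(1 - 2*s) := by
      apply Real.le_sqrt_of_sq_le
      rw [← Real.exp_nat_mul]
      convert hu using 2
      push_cast; ring
    calc _ = Real.exp (-s) * ((√(2 * Real.pi))⁻¹ * √(Real.pi / (1/2 - s))) := by ring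
      _ = Real.exp (-s) * (√(1 - 2*s))⁻¹ := by rw [e1]
      _ ≤ Real.exp (-s) * (Real.exp (-(s + 2 * s^2)))⁻¹ := by gcongr
      _ = _ := by rw [← Real.exp_neg, ← Real.exp_add]; congr 1; ring

lemma chi_sum_mgf {p : ℕ} (d : Fin p → ℝ) (hd : ∀ k, |d k| ≤ 1/8) :
    ∫⁻ g, ENNReal.ofReal (Real.exp (∑ k, d k * ((g k)^2 - 1)))
      ∂(Measure.pi (fun _ : Fin p => gaussianReal 0 1))
      ≤ ENNReal.ofReal (Real.exp (2 * ∑ k, d k ^ 2)) := by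
  have hI := Integrable.fintype_prod (f := fun k (x : ℝ) => Real.exp (d k * (x^2 - 1)))
    (μ := fun _ : Fin p => gaussianReal 0 1) (fun k => (chi_mgf (d k) (hd k)).1)
  simp only [Real.exp_sum]
  rw [← ofReal_integral_eq_lintegral_ofReal hI (ae_of_all _ fun x => by positivity)]
  apply ENNReal.ofReal_le_ofReal
  rw [integral_fintype_prod_eq_prod (f := fun k (x : ℝ) => Real.exp (d k * (x^2 - 1))),
    Finset.mul_sum, Real.exp_sum]
  exact Finset.prod_le_prod (fun k _ => integral_nonneg fun x => by positivity)
    (fun k _ => (chi_mgf (d k) (hd k)).2)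

lemma pow_le_exp_add_s15 (x : ℝ) (k : ℕ) :
    x^(2*k) ≤ ((2*k).factorial : ℝ) * (Real.exp x + Real.exp (-x)) := by
  have h := Real.pow_div_factorial_le_exp |x| (abs_nonneg x) (2*k)
  rw [div_le_iff₀ (by positivity), pow_mul, sq_abs, ← pow_mul] at h
  have h2 : Real.exp |x| ≤ Real.exp x + Real.exp (-x) := by
    rcases abs_cases x with ⟨h, _⟩ | ⟨h, _⟩ <;> rw [h] <;>
      linarith [Real.exp_pos x, Real.exp_pos (-x)]
  calc _ ≤ _ := h
    _ ≤ (Real.exp x + Real.exp (-x)) * ((2*k).factorial : ℝ) := by gcongr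
    _ = _ := mul_comm _ _

/-- Moment bound for a centered weighted chi-square sum. -/
lemma chi_sum_moment {p : ℕ} (d : Fin p → ℝ) (V : ℝ) (hV : ∑ k, d k ^ 2 ≤ V) (hV0 : 0 < V)
    (k : ℕ) :
    ∫⁻ g, ENNReal.ofReal ((∑ i, d i * ((g i)^2 - 1)) ^ (2*k))
      ∂(Measure.pi (fun _ : Fin p => gaussianReal 0 1))
      ≤ ENNReal.ofReal (((2*k).factorial : ℝ) * 4 * 64 ^ k * V ^ k) := by
  set t : ℝ := 1 / (8 * √V) with ht
  have hs : 0 < √V := Real.sqrt_pos.2 hV0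
  have ht0 : 0 < t := by positivity
  have ht2 : t^2 * V = 1/64 := by
    rw [ht, div_pow, mul_pow, Real.sq_sqrt hV0.le]; field_simp; norm_num
  have hdk : ∀ j, |t * d j| ≤ 1/8 := by
    intro j
    apply abs_le_of_sq_le_sq _ (by norm_num)
    have : d j ^ 2 ≤ V := le_trans
      (Finset.single_le_sum (f := fun k => d k ^ 2) (fun _ _ => sq_nonneg _) (mem_univ j)) hV
    rw [mul_pow]
    nlinarith [mul_le_mul_of_nonneg_left this (sq_nonneg t)]
  have hexp : ∀ e : Fin p → ℝ, (∀ j, |e j| ≤ 1/8) → (∀ j, e j ^ 2 = t^2 * d j ^ 2) →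
     ∫⁻ g, ENNReal.ofReal (Real.exp (∑ k, e k * ((g k)^2 - 1)))
      ∂(Measure.pi (fun _ : Fin p => gaussianReal 0 1)) ≤ ENNReal.ofReal 2 := by
    intro e he1 he2
    refine (chi_sum_mgf e he1).trans (ENNReal.ofReal_le_ofReal ?_)
    have h1 : ∑ k, e k ^ 2 ≤ 1/64 := by
      simp only [he2, ← Finset.mul_sum]
      nlinarith [mul_le_mul_of_nonneg_left hV (sq_nonneg t)]
    have h2 : Real.exp (2 * ∑ k, e k ^ 2) ≤ Real.exp (1/32) := Real.exp_le_exp.2 (by linarith)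
    have h3 := one_sub_exp_aux (-1/4) (by norm_num [abs_le])
    have h4 : Real.exp (1/32) ≤ Real.exp (-(-1/4 + (-1/4)^2)) := Real.exp_le_exp.2 (by norm_num)
    linarith
  have hp := hexp (fun j => t * d j) hdk (fun j => by ring)
  have hm := hexp (fun j => -(t * d j)) (fun j => by rw [abs_neg]; exact hdk j) (fun j => by ring)
  have hcst : (0:ℝ) ≤ ((2*k).factorial : ℝ) * (64 * V)^k := by positivity
  have hpt : ∀ g : Fin p → ℝ, ENNReal.ofReal ((∑ i, d i * ((g i)^2 - 1)) ^ (2*k)) ≤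
      ENNReal.ofReal (((2*k).factorial : ℝ) * (64 * V)^k) *
       (ENNReal.ofReal (Real.exp (∑ i, (t * d i) * ((g i)^2 - 1))) +
        ENNReal.ofReal (Real.exp (∑ i, -(t * d i) * ((g i)^2 - 1)))) := by
    intro g
    rw [← ENNReal.ofReal_add (by positivity) (by positivity), ← ENNReal.ofReal_mul hcst]
    apply ENNReal.ofReal_le_ofReal
    set Q := ∑ i, d i * ((g i)^2 - 1) with hQ
    have e1 : ∑ i, (t * d i) * ((g i)^2 - 1) = t * Q := by
      rw [hQ, Finset.mul_sum]; exact Finset.sum_congr rfl fun i _ => by ring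
    have e2 : ∑ i, -(t * d i) * ((g i)^2 - 1) = -(t * Q) := by
      rw [← e1, ← Finset.sum_neg_distrib]; exact Finset.sum_congr rfl fun i _ => by ring
    rw [e1, e2]
    have h := pow_le_exp_add_s15 (t * Q) k
    have e3 : Q ^ (2*k) = (64 * V)^k * (t*Q)^(2*k) := by
      rw [pow_mul, pow_mul, ← mul_pow]
      congr 1
      rw [mul_pow]
      linear_combination (-64 * Q^2) * ht2
    rw [e3]
    calc _ ≤ (64 * V)^k * (((2*k).factorial : ℝ) * (Real.exp (t*Q) + Real.exp (-(t*Q)))) := by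
          gcongr
      _ = _ := by ring
  refine (lintegral_mono hpt).trans ?_
  rw [lintegral_const_mul _ (by fun_prop), lintegral_add_left (by fun_prop)]
  calc _ ≤ ENNReal.ofReal (((2*k).factorial : ℝ) * (64 * V)^k) *
        (ENNReal.ofReal 2 + ENNReal.ofReal 2) := by gcongr
    _ = _ := by
      rw [← ENNReal.ofReal_add (by norm_num) (by norm_num), ← ENNReal.ofReal_mul hcst]
      congr 1
      rw [mul_pow]; ring

open Matrix in
lemma spectral_real {p : ℕ} (B : Matrix (Fin p) (Fin p) ℝ) (hB : B.IsSymm) :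
    ∃ (U : Matrix (Fin p) (Fin p) ℝ) (d : Fin p → ℝ), U * Uᵀ = 1 ∧ Uᵀ * U = 1 ∧
      B = U * diagonal d * Uᵀ := by
  have hH : B.IsHermitian := by
    rw [Matrix.IsHermitian, conjTranspose_eq_transpose_of_trivial]; exact hB
  refine ⟨hH.eigenvectorUnitary, hH.eigenvalues, ?_, ?_, ?_⟩
  · have := Unitary.coe_mul_star_self hH.eigenvectorUnitary
    rwa [Unitary.coe_star, star_eq_conjTranspose, conjTranspose_eq_transpose_of_trivial] at this
  · have := Unitary.coe_star_mul_self hH.eigenvectorUnitary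
    rwa [star_eq_conjTranspose, conjTranspose_eq_transpose_of_trivial] at this
  · have := hH.spectral_theorem
    rwa [Unitary.conjStarAlgAut_apply, star_eq_conjTranspose,
      conjTranspose_eq_transpose_of_trivial] at this

open Matrix in
lemma sum_quad {p : ℕ} (S : Matrix (Fin p) (Fin p) ℝ) (v w : Fin p → ℝ) :
    ∑ i, ∑ j, v i * S i j * w j = v ⬝ᵥ (S *ᵥ w) := by
  simp only [dotProduct, mulVec, Finset.mul_sum, mul_assoc]

open Matrix in
lemma simult_diag {p : ℕ} (S : Matrix (Fin p) (Fin p) ℝ) (hS : S.IsSymm)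
    (hpos : ∀ v : Fin p → ℝ, 0 ≤ ∑ i, ∑ j, v i * S i j * v j) (c : Fin p → ℝ) :
    ∃ (W : Matrix (Fin p) (Fin p) ℝ) (d : Fin p → ℝ), W * Wᵀ = S ∧
      Wᵀ * diagonal c * W = diagonal d := by
  obtain ⟨U, l, h1, h2, h3⟩ := spectral_real S hS
  have hl : ∀ k, 0 ≤ l k := by
    intro k
    have h := hpos (U *ᵥ Pi.single k 1)
    rw [sum_quad, dotProduct_mulVec, vecMul_mulVec, ← dotProduct_mulVec] at h
    have e : (Uᵀ * S) * U = diagonal l := by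
      rw [h3]
      calc _ = (Uᵀ * U) * diagonal l * (Uᵀ * U) := by simp only [Matrix.mul_assoc]
        _ = _ := by rw [h2]; simp
    rw [mulVec_mulVec] at h
    have e' : (Sᵀ * U)ᵀ * U = diagonal l := by
      rw [transpose_mul, transpose_transpose, e]
    simpa [e, e'] using h
  set A := U * diagonal (fun k => √(l k)) with hA
  have hAA : A * Aᵀ = S := by
    rw [hA, transpose_mul, diagonal_transpose, h3]
    calc _ = U * (diagonal (fun k => √(l k)) * diagonal (fun k => √(l k))) * Uᵀ := by
          simp only [Matrix.mul_assoc]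
      _ = _ := by simp [diagonal_mul_diagonal, Real.mul_self_sqrt (hl _)]
  obtain ⟨O, d, g1, g2, g3⟩ := spectral_real (Aᵀ * diagonal c * A) (by
    simp [Matrix.IsSymm, transpose_mul, Matrix.mul_assoc])
  refine ⟨A * O, d, ?_, ?_⟩
  · calc _ = A * (O * Oᵀ) * Aᵀ := by simp only [transpose_mul, Matrix.mul_assoc]
      _ = S := by rw [g1, Matrix.mul_one, hAA]
  · calc _ = Oᵀ * (Aᵀ * diagonal c * A) * O := by simp only [transpose_mul, Matrix.mul_assoc]
      _ = (Oᵀ * O) * diagonal d * (Oᵀ * O) := by rw [g3]; simp only [Matrix.mul_assoc]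
      _ = _ := by rw [g2]; simp

open Matrix in
lemma row_sq_le {p : ℕ} (M₀ : ℝ) (S : Matrix (Fin p) (Fin p) ℝ) (hS : S.IsSymm)
    (hpos : ∀ v : Fin p → ℝ, 0 ≤ ∑ i, ∑ j, v i * S i j * v j)
    (hle : ∀ v : Fin p → ℝ, ∑ i, ∑ j, v i * S i j * v j ≤ M₀ * ∑ i, v i ^ 2) (k : Fin p) :
    ∑ i, S i k ^ 2 ≤ M₀ ^ 2 := by
  simp only [sum_quad] at hpos hle
  set v : Fin p → ℝ := fun i => S i k with hv
  set N := ∑ i, S i k ^ 2 with hN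
  have hN0 : 0 ≤ N := Finset.sum_nonneg fun _ _ => sq_nonneg _
  set e : Fin p → ℝ := Pi.single k 1 with he
  have hSe : S *ᵥ e = v := by simp [he, hv]; rfl
  have hvv : v ⬝ᵥ v = N := by simp [dotProduct, hv, hN, sq]
  have heSv : e ⬝ᵥ (S *ᵥ v) = N := by
    rw [dotProduct_mulVec, ← mulVec_transpose, hS.eq, hSe, hvv]
  have hA : v ⬝ᵥ (S *ᵥ v) ≤ M₀ * N := hle v
  have hB : e ⬝ᵥ (S *ᵥ e) ≤ M₀ := by
    refine (hle e).trans (le_of_eq ?_)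
    simp [he, Pi.single_apply]
  have hq : ∀ t : ℝ, 0 ≤ (v ⬝ᵥ (S *ᵥ v)) * (t * t) + (-2 * N) * t + e ⬝ᵥ (S *ᵥ e) := by
    intro t
    have h := hpos (t • v - e)
    have : (t • v - e) ⬝ᵥ S *ᵥ (t • v - e) =
      (v ⬝ᵥ (S *ᵥ v)) * (t * t) + (-2 * N) * t + e ⬝ᵥ (S *ᵥ e) := by
      simp only [mulVec_sub, mulVec_smul, sub_dotProduct, dotProduct_sub, smul_dotProduct,
        dotProduct_smul, smul_eq_mul, heSv]
      rw [hSe, hvv]; ring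
    rwa [this] at h
  have hd := discrim_le_zero hq
  rw [discrim] at hd
  have hv0 := hpos v
  have he0 := hpos e
  have h1 : N^2 ≤ (M₀ * N) * M₀ := by
    have : (v ⬝ᵥ (S *ᵥ v)) * (e ⬝ᵥ (S *ᵥ e)) ≤ (M₀ * N) * M₀ :=
      mul_le_mul hA hB he0 (hv0.trans hA)
    nlinarith
  rcases hN0.eq_or_lt with h | h
  · rw [← h]; positivity
  · nlinarith

open Matrix in
lemma quad_coords {p : ℕ} (W : Matrix (Fin p) (Fin p) ℝ) (c d : Fin p → ℝ)
    (h : Wᵀ * diagonal c * W = diagonal d) (g : Fin p → ℝ) :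
    ∑ i, c i * ((W *ᵥ g) i) ^ 2 = ∑ k, d k * g k ^ 2 := by
  have e1 : ∑ i, c i * ((W *ᵥ g) i) ^ 2 = (W *ᵥ g) ⬝ᵥ (diagonal c *ᵥ (W *ᵥ g)) := by
    simp only [dotProduct, mulVec_diagonal]
    exact Finset.sum_congr rfl fun i _ => by ring
  have e2 : ∑ k, d k * g k ^ 2 = g ⬝ᵥ (diagonal d *ᵥ g) := by
    simp only [dotProduct, mulVec_diagonal]
    exact Finset.sum_congr rfl fun i _ => by ring
  rw [e1, e2, ← h, Matrix.mul_assoc, ← mulVec_mulVec, dotProduct_mulVec g, vecMul_transpose,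
    mulVec_mulVec]

open Matrix in
lemma trace_coords {p : ℕ} (S W : Matrix (Fin p) (Fin p) ℝ) (c d : Fin p → ℝ)
    (hW : W * Wᵀ = S) (h : Wᵀ * diagonal c * W = diagonal d) :
    ∑ i, c i * S i i = ∑ k, d k := by
  have e1 : ∑ k, d k = trace (diagonal d) := by simp
  have e2 : ∑ i, c i * S i i = trace (diagonal c * S) := by simp [trace, diagonal_mul]
  rw [e1, e2, ← h, ← hW, Matrix.mul_assoc Wᵀ, trace_mul_comm Wᵀ, Matrix.mul_assoc]

open Matrix in
lemma frob_coords {p : ℕ} (S W : Matrix (Fin p) (Fin p) ℝ) (c d : Fin p → ℝ)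
    (hS : S.IsSymm)
    (hW : W * Wᵀ = S) (h : Wᵀ * diagonal c * W = diagonal d) :
    ∑ k, d k ^ 2 = ∑ i, ∑ j, c i * c j * S i j ^ 2 := by
  have e1 : ∑ k, d k ^ 2 = trace (diagonal d * diagonal d) := by simp [sq]
  have e2 : ∑ i, ∑ j, c i * c j * S i j ^ 2 = trace ((diagonal c * S) * (diagonal c * S)) := by
    simp only [trace, Matrix.diag, Matrix.mul_apply (M := diagonal c * S), diagonal_mul]
    refine Finset.sum_congr rfl fun i _ => Finset.sum_congr rfl fun j _ => ?_
    rw [hS.apply i j]; ring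
  rw [e1, e2, ← h, ← hW]
  rw [show Wᵀ * diagonal c * W * (Wᵀ * diagonal c * W) =
    Wᵀ * (diagonal c * W * Wᵀ * diagonal c * W) by simp only [Matrix.mul_assoc],
    trace_mul_comm Wᵀ]
  simp only [Matrix.mul_assoc]

lemma frob_le {p : ℕ} (M₀ : ℝ) (S : Matrix (Fin p) (Fin p) ℝ) (hS : S.IsSymm)
    (hrow : ∀ k, ∑ i, S i k ^ 2 ≤ M₀ ^ 2) (c : Fin p → ℝ) :
    ∑ i, ∑ j, c i * c j * S i j ^ 2 ≤ M₀ ^ 2 * ∑ i, c i ^ 2 := by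
  have h1 : ∑ i, ∑ j, c i * c j * S i j ^ 2 ≤
      ∑ i, ∑ j, (c i ^ 2 * S i j ^ 2 / 2 + c j ^ 2 * S i j ^ 2 / 2) := by
    refine Finset.sum_le_sum fun i _ => Finset.sum_le_sum fun j _ => ?_
    nlinarith [mul_nonneg (sq_nonneg (c i - c j)) (sq_nonneg (S i j))]
  have h2 : ∑ i, ∑ j, c j ^ 2 * S i j ^ 2 / 2 = ∑ i, ∑ j, c i ^ 2 * S i j ^ 2 / 2 := by
    rw [Finset.sum_comm]
    refine Finset.sum_congr rfl fun i _ => Finset.sum_congr rfl fun j _ => ?_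
    rw [hS.apply i j]
  have h3 : ∑ i, ∑ j, c i ^ 2 * S i j ^ 2 / 2 ≤ (M₀ ^ 2 * ∑ i, c i ^ 2) / 2 := by
    rw [Finset.mul_sum, Finset.sum_div]
    refine Finset.sum_le_sum fun i _ => ?_
    rw [← Finset.sum_div, ← Finset.mul_sum]
    have := hrow i
    simp only [hS.apply i] at this
    have := mul_le_mul_of_nonneg_left this (sq_nonneg (c i))
    linarith
  simp only [Finset.sum_add_distrib] at h1
  linarith

open Matrix in
/-- A centered Gaussian law is the image of the standard one under `W` when `W Wᵀ = S`. -/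
lemma gaussian_law {p : ℕ} (S W : Matrix (Fin p) (Fin p) ℝ) (hW : W * Wᵀ = S)
    (μ : Measure (Fin p → ℝ)) [IsProbabilityMeasure μ]
    (hμ : ∀ a : Fin p → ℝ, μ.map (fun x => ∑ i, a i * x i)
      = gaussianReal 0 (∑ i, ∑ j, a i * S i j * a j).toNNReal) :
    μ = (Measure.pi (fun _ : Fin p => gaussianReal 0 1)).map (fun g => W *ᵥ g) := by
  have hm : Measurable (fun g : Fin p → ℝ => W *ᵥ g) :=
    (Continuous.matrix_mulVec continuous_const continuous_id).measurable
  have : IsProbabilityMeasure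
      ((Measure.pi (fun _ : Fin p => gaussianReal 0 1)).map (fun g => W *ᵥ g)) :=
    Measure.isProbabilityMeasure_map hm.aemeasurable
  apply Measure.ext_of_charFunDual
  funext L
  set a : Fin p → ℝ := fun i => L (Pi.single i 1) with ha
  have hL : ∀ x, L x = ∑ i, a i * x i := by
    intro x
    conv_lhs => rw [pi_eq_sum_univ' x]
    rw [map_sum]
    refine Finset.sum_congr rfl fun i _ => ?_
    rw [map_smul, smul_eq_mul, mul_comm]
  have hLHS : charFunDual μ L = Complex.exp (-(∑ i, ∑ j, a i * S i j * a j : ℝ) / 2) := by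
    rw [charFunDual_eq_charFun_map_one, show (⇑L) = fun x => ∑ i, a i * x i from funext hL, hμ,
      charFun_gaussianReal, Real.coe_toNNReal]
    · congr 1; push_cast; ring
    · rw [sum_quad, ← hW, ← mulVec_mulVec, dotProduct_mulVec, ← mulVec_transpose]
      exact Finset.sum_nonneg fun i _ => mul_self_nonneg _
  rw [hLHS]
  let WL : (Fin p → ℝ) →L[ℝ] (Fin p → ℝ) := LinearMap.toContinuousLinearMap (Matrix.toLin' W)
  have hWL : (fun g : Fin p → ℝ => W *ᵥ g) = ⇑WL := by
    funext g; simp [WL]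
  rw [hWL, charFunDual_map, charFunDual_pi]
  have hk : ∀ k, charFunDual (gaussianReal 0 1)
      ((L ∘SL WL) ∘SL ContinuousLinearMap.single ℝ (fun _ => ℝ) k) =
      Complex.exp (-(((Wᵀ *ᵥ a) k ^ 2 : ℝ)) / 2) := by
    intro k
    rw [charFunDual_eq_charFun_map_one]
    have : ⇑((L ∘SL WL) ∘SL ContinuousLinearMap.single ℝ (fun _ : Fin p => ℝ) k)
        = fun x => ((Wᵀ *ᵥ a) k) * x := by
      funext x
      simp [WL, hL, mulVec, dotProduct, Finset.sum_mul]
      exact Finset.sum_congr rfl fun i _ => by ring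
    rw [this, gaussianReal_map_const_mul, charFun_gaussianReal]
    congr 1; push_cast; simp; ring
  simp only [hk]
  rw [← Complex.exp_sum]
  congr 1
  rw [← Finset.sum_div, Finset.sum_neg_distrib, ← Complex.ofReal_sum]
  congr 3
  rw [sum_quad, ← hW, ← mulVec_mulVec, dotProduct_mulVec, ← mulVec_transpose]
  simp [dotProduct, sq]

/-- Moment bound for a centered diagonal quadratic form of a Gaussian vector. -/
lemma gauss_moment {p : ℕ} (M₀ : ℝ) (hM₀ : 0 < M₀) (S : Matrix (Fin p) (Fin p) ℝ) (hS : S.IsSymm)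
    (hpos : ∀ v : Fin p → ℝ, 0 ≤ ∑ i, ∑ j, v i * S i j * v j)
    (hle : ∀ v : Fin p → ℝ, ∑ i, ∑ j, v i * S i j * v j ≤ M₀ * ∑ i, v i ^ 2)
    (μ : Measure (Fin p → ℝ)) [IsProbabilityMeasure μ]
    (hμ : ∀ a : Fin p → ℝ, μ.map (fun x => ∑ i, a i * x i)
      = gaussianReal 0 (∑ i, ∑ j, a i * S i j * a j).toNNReal)
    (k : ℕ) (hk : k ≠ 0) (c : Fin p → ℝ) :
    ∫⁻ x, ENNReal.ofReal ((∑ i, c i * (x i ^ 2 - S i i)) ^ (2*k)) ∂μ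
      ≤ ENNReal.ofReal (((2*k).factorial : ℝ) * 4 * 64 ^ k * (M₀ ^ 2) ^ k *
          (∑ i, c i ^ 2) ^ k) := by
  by_cases hc : ∑ i, c i ^ 2 = 0
  · have : ∀ i, c i = 0 := by
      intro i
      have := (Finset.sum_eq_zero_iff_of_nonneg (fun i _ => sq_nonneg (c i))).1 hc i (mem_univ i)
      simpa using this
    simp [this, hk]
  have hc0 : 0 < ∑ i, c i ^ 2 :=
    lt_of_le_of_ne (Finset.sum_nonneg fun _ _ => sq_nonneg _) (Ne.symm hc)
  obtain ⟨W, d, hW, hd⟩ := simult_diag S hS hpos c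
  have hV : ∑ k, d k ^ 2 ≤ M₀ ^ 2 * ∑ i, c i ^ 2 := by
    rw [frob_coords S W c d hS hW hd]
    exact frob_le M₀ S hS (row_sq_le M₀ S hS hpos hle) c
  have hm : Measurable (fun g : Fin p → ℝ => W.mulVec g) :=
    (Continuous.matrix_mulVec continuous_const continuous_id).measurable
  rw [gaussian_law S W hW μ hμ, lintegral_map (by fun_prop) hm]
  have e : ∀ g : Fin p → ℝ, ∑ i, c i * ((W.mulVec g) i ^ 2 - S i i)
      = ∑ k, d k * (g k ^ 2 - 1) := by
    intro g
    simp only [mul_sub, Finset.sum_sub_distrib, mul_one]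
    rw [quad_coords W c d hd, trace_coords S W c d hW hd]
  simp only [e]
  refine (chi_sum_moment d _ hV (by positivity) k).trans (le_of_eq ?_)
  rw [mul_pow]; congr 1; ring

lemma double_moment {p : ℕ} (M₀ : ℝ) (hM₀ : 0 < M₀) (S : Matrix (Fin p) (Fin p) ℝ)
    (hS : S.IsSymm)
    (hpos : ∀ v : Fin p → ℝ, 0 ≤ ∑ i, ∑ j, v i * S i j * v j)
    (hle : ∀ v : Fin p → ℝ, ∑ i, ∑ j, v i * S i j * v j ≤ M₀ * ∑ i, v i ^ 2)
    (μ ν : Measure (Fin p → ℝ)) [IsProbabilityMeasure μ] [IsProbabilityMeasure ν]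
    (hμ : ∀ a : Fin p → ℝ, μ.map (fun x => ∑ i, a i * x i)
      = gaussianReal 0 (∑ i, ∑ j, a i * S i j * a j).toNNReal)
    (hν : ∀ a : Fin p → ℝ, ν.map (fun x => ∑ i, a i * x i)
      = gaussianReal 0 (∑ i, ∑ j, a i * S i j * a j).toNNReal)
    (m : ℕ) (a : Matrix (Fin p) (Fin p) ℝ) (B : ℝ) (ha : ∀ i j, |a i j| ≤ B) (hp : 0 < p) :
    ∫⁻ z, ENNReal.ofReal
      ((∑ i, ∑ j, a i j * (z.1 i ^ 2 - S i i) * (z.2 j ^ 2 - S j j)) ^ (2*(m+1))) ∂(μ.prod ν)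
      ≤ ENNReal.ofReal ((((2*(m+1)).factorial : ℝ) * 4 * 64 ^ (m+1) * (M₀ ^ 2) ^ (m+1)) ^ 2 *
          (B * p) ^ (2*(m+1))) := by
  set D : ℝ := ((2*(m+1)).factorial : ℝ) * 4 * 64 ^ (m+1) * (M₀ ^ 2) ^ (m+1) with hD
  have hD0 : 0 ≤ D := by positivity
  have hpR : (0:ℝ) < p := by exact_mod_cast hp
  rw [lintegral_prod_symm' _ (by fun_prop)]
  set c : (Fin p → ℝ) → Fin p → ℝ := fun y i => ∑ j, a i j * (y j ^ 2 - S j j) with hc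
  have hinner : ∀ y : Fin p → ℝ, ∫⁻ x, ENNReal.ofReal
      ((∑ i, ∑ j, a i j * (x i ^ 2 - S i i) * (y j ^ 2 - S j j)) ^ (2*(m+1))) ∂μ
      ≤ ENNReal.ofReal (D * (p:ℝ)^m) * ∑ i, ENNReal.ofReal (c y i ^ (2*(m+1))) := by
    intro y
    have e : ∀ x : Fin p → ℝ, ∑ i, ∑ j, a i j * (x i ^ 2 - S i i) * (y j ^ 2 - S j j)
        = ∑ i, c y i * (x i ^ 2 - S i i) := by
      intro x
      refine Finset.sum_congr rfl fun i _ => ?_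
      rw [hc, Finset.sum_mul]
      exact Finset.sum_congr rfl fun j _ => by ring
    simp only [e]
    refine (gauss_moment M₀ hM₀ S hS hpos hle μ hμ (m+1) (by omega) (c y)).trans ?_
    have hev : ∀ i, 0 ≤ c y i ^ (2*(m+1)) := fun i => by rw [pow_mul]; positivity
    rw [← ENNReal.ofReal_sum_of_nonneg (fun i _ => hev i), ← ENNReal.ofReal_mul (by positivity)]
    apply ENNReal.ofReal_le_ofReal
    have h := pow_sum_div_card_le_sum_pow (s := Finset.univ) (f := fun i => c y i ^ 2)
      (fun i _ => sq_nonneg _) m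
    rw [Finset.card_univ, Fintype.card_fin, div_le_iff₀ (by positivity)] at h
    simp only [← pow_mul] at h
    rw [← hD, mul_assoc D]
    refine mul_le_mul_of_nonneg_left ?_ hD0
    linarith
  refine (lintegral_mono hinner).trans ?_
  have hcm : ∀ i, Measurable fun y => c y i := fun i => by simp only [hc]; fun_prop
  rw [lintegral_const_mul _ (Finset.measurable_sum _ fun i _ => by fun_prop),
    lintegral_finsetSum _ (fun i _ => by fun_prop)]
  have hi : ∀ i, ∫⁻ y, ENNReal.ofReal (c y i ^ (2*(m+1))) ∂ν
      ≤ ENNReal.ofReal (D * (p * B^2)^(m+1)) := by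
    intro i
    refine (gauss_moment M₀ hM₀ S hS hpos hle ν hν (m+1) (by omega) (a i)).trans ?_
    apply ENNReal.ofReal_le_ofReal
    rw [← hD]
    have : ∑ j, a i j ^ 2 ≤ p * B^2 := by
      calc _ ≤ ∑ _j : Fin p, B^2 := Finset.sum_le_sum fun j _ =>
            sq_le_sq' (abs_le.1 (ha i j)).1 (abs_le.1 (ha i j)).2
        _ = _ := by simp
    have h0 : 0 ≤ ∑ j, a i j ^ 2 := Finset.sum_nonneg fun _ _ => sq_nonneg _
    gcongr
  calc _ ≤ ENNReal.ofReal (D * (p:ℝ)^m) * ∑ _i : Fin p, ENNReal.ofReal (D * (p * B^2)^(m+1)) := by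
        gcongr with i; exact hi i
    _ = _ := by
      rw [Finset.sum_const, Finset.card_univ, Fintype.card_fin, nsmul_eq_mul,
        ← ENNReal.ofReal_natCast, ← ENNReal.ofReal_mul (by positivity),
        ← ENNReal.ofReal_mul (by positivity)]
      congr 1
      rw [mul_pow B, mul_pow (p:ℝ), ← pow_mul B]; ring

/-- For `Z₁, Z₂` i.i.d. `N_p(0,Σ)` with `Σ ∈ 𝓕_α` and
`h(Z₁,Z₂) = ∑_{i,j} 2 b_n b̄_ij (z_{1i}²−σ_ii)(z_{2j}²−σ_jj)` with
`b_n = n/((n+1)(n-2))` and `|b̄_ij| ≤ C_n`, for any even `K₀ ≥ 2` there is `C`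
with `𝔼 h(Z₁,Z₂)^{K₀} ≤ C (C_n p)^{K₀}/n^{K₀}`. -/
theorem stmt15 (M M₀ α : ℝ) (hM : 0 < M) (hM₀ : 0 < M₀) (hα : 0 < α)
    (K₀ : ℕ) (hK : 2 ≤ K₀) (hKeven : Even K₀) :
    ∃ C : ℝ, 0 < C ∧
      ∀ (p n τ : ℕ), 3 ≤ n → 1 ≤ τ → τ ≤ p →
      ∀ (Cn : ℝ), 0 ≤ Cn →
      ∀ (S : Matrix (Fin p) (Fin p) ℝ), S.IsSymm →
        (∀ v : Fin p → ℝ, 0 ≤ ∑ i, ∑ j, v i * S i j * v j) →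
        (∀ v : Fin p → ℝ, ∑ i, ∑ j, v i * S i j * v j ≤ M₀ * ∑ i, v i ^ 2) →
        (∀ k : ℕ, 1 ≤ k → ∀ j : Fin p,
            ∑ i ∈ Finset.univ.filter
                (fun i : Fin p => k < ((i : ℤ) - (j : ℤ)).natAbs),
              |S i j| ≤ M * (k : ℝ) ^ (-α)) →
      ∀ (bbar : Matrix (Fin p) (Fin p) ℝ), (∀ i j, |bbar i j| ≤ Cn) →
      ∀ (Ω : Type) (_ : MeasureSpace Ω)
        (_ : IsProbabilityMeasure (ℙ : Measure Ω))
        (Z₁ Z₂ : Ω → Fin p → ℝ), Measurable Z₁ → Measurable Z₂ →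
        IsGaussianVec Z₁ S → IsGaussianVec Z₂ S → IndepFun Z₁ Z₂ ℙ →
      (∫ ω, (∑ i : Fin p, ∑ j : Fin p,
            2 * ((n : ℝ) / (((n : ℝ) + 1) * ((n : ℝ) - 2))) * bbar i j
              * (Z₁ ω i ^ 2 - S i i) * (Z₂ ω j ^ 2 - S j j)) ^ K₀ ∂ℙ)
        ≤ C * (Cn * p) ^ K₀ / (n : ℝ) ^ K₀ := by
  obtain ⟨k, hk⟩ := hKeven
  obtain ⟨m, rfl⟩ : ∃ m, k = m + 1 := ⟨k - 1, by omega⟩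
  obtain rfl : K₀ = 2 * (m + 1) := by omega
  refine ⟨(((2*(m+1)).factorial : ℝ) * 4 * 64 ^ (m+1) * (M₀ ^ 2) ^ (m+1)) ^ 2
    * 6 ^ (2*(m+1)), by positivity, ?_⟩
  intro p n τ hn hτ hτp Cn hCn S hS hpos hle _ bbar hb Ω _ _ Z₁ Z₂ hZ₁ hZ₂ hG₁ hG₂ hind
  set D : ℝ := ((2*(m+1)).factorial : ℝ) * 4 * 64 ^ (m+1) * (M₀ ^ 2) ^ (m+1) with hD
  have hnR : (3:ℝ) ≤ n := by exact_mod_cast hn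
  have hbn : (n : ℝ) / (((n : ℝ) + 1) * ((n : ℝ) - 2)) ≤ 3 / n := by
    rw [div_le_div_iff₀ (by nlinarith) (by linarith)]
    nlinarith
  have hbn0 : 0 ≤ (n : ℝ) / (((n : ℝ) + 1) * ((n : ℝ) - 2)) :=
    div_nonneg (by linarith) (by nlinarith)
  have : IsProbabilityMeasure ((ℙ : Measure Ω).map Z₁) :=
    Measure.isProbabilityMeasure_map hZ₁.aemeasurable
  have : IsProbabilityMeasure ((ℙ : Measure Ω).map Z₂) :=
    Measure.isProbabilityMeasure_map hZ₂.aemeasurable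
  have hlaw : ∀ Z : Ω → Fin p → ℝ, Measurable Z → IsGaussianVec Z S →
      ∀ a : Fin p → ℝ, ((ℙ : Measure Ω).map Z).map (fun x => ∑ i, a i * x i)
      = gaussianReal 0 (∑ i, ∑ j, a i * S i j * a j).toNNReal := by
    intro Z hZ hG a
    rw [Measure.map_map (by fun_prop) hZ]
    exact hG a
  have hev : ∀ x : ℝ, 0 ≤ x ^ (2*(m+1)) := fun x => by rw [pow_mul]; positivity
  have hmain := double_moment M₀ hM₀ S hS hpos hle _ _ (hlaw Z₁ hZ₁ hG₁) (hlaw Z₂ hZ₂ hG₂) m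
    (fun i j => 2 * ((n : ℝ) / (((n : ℝ) + 1) * ((n : ℝ) - 2))) * bbar i j) (6 * Cn / n)
    (by
      intro i j
      rw [abs_mul, abs_of_nonneg (by positivity)]
      calc _ ≤ 2 * (3 / (n:ℝ)) * Cn := by gcongr; exact hb i j
        _ = _ := by ring) (by omega)
  rw [← hind.map_prod_eq_prod_map_map hZ₁.aemeasurable hZ₂.aemeasurable,
    lintegral_map (by fun_prop) (hZ₁.prodMk hZ₂)] at hmain
  rw [integral_eq_lintegral_of_nonneg_ae (ae_of_all _ fun ω => hev _)
    (by
      have h1 : ∀ i, Measurable fun ω => Z₁ ω i := fun i => (measurable_pi_apply i).comp hZ₁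
      have h2 : ∀ i, Measurable fun ω => Z₂ ω i := fun i => (measurable_pi_apply i).comp hZ₂
      exact Measurable.aestronglyMeasurable (by fun_prop))]
  refine (ENNReal.toReal_mono ENNReal.ofReal_ne_top hmain).trans (le_of_eq ?_)
  rw [ENNReal.toReal_ofReal (mul_nonneg (sq_nonneg _) (hev _)), ← hD,
    show 6 * Cn / (n:ℝ) * p = 6 * (Cn * p) / n by ring, div_pow, mul_pow 6]
  ring
end
end
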